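/- Let N ≥ 1 and let Ω and M be bounded domains in ℂ^N. Let f_j : Ω → M be injective holomorphic maps such that for every compact K ⊆ M there is j_0(K) with K ⊆ f_j(Ω) for all j ≥ j_0(K). Assume there exist a point a ∈ M, points x_j ∈ Ω with f_j(x_j) = a for all j, and a point p ∈ Ω such that x_j → p. Then there exists a holomorphic bijection from Ω onto M with holomorphic inverse. -/

import Mathlib

open Filter Topology Set

open Metric

/-
By Montel's theorem the maps `f j` and their inverses `g j` have locally uniform limits `F` on `Ω`
and `G` on `M` along an ultrafilter. Since `f j (x j) = a` and `x j → p`, one has `F p = a ∈ M`, so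
`g j ∘ f j = id` passes to the limit near `p`, and the Jacobians of `F` at `p` and of `G` at `a` do
not vanish. By Hurwitz' theorem a limit of nowhere vanishing Jacobians which is nonzero somewhere is
nonzero everywhere. Hence `F` and `G` are local biholomorphisms, and a quantitative inverse function
theorem shows that each value `F z` is also a value of some `f j`, so `F` maps `Ω` into `M`, and
similarly `G` maps `M` into `Ω`. Now both compositions pass to the limit everywhere.

That the `g j` are holomorphic is Osgood's theorem: an injective holomorphic map has nonvanishing
Jacobian. By the constant rank theorem the Jacobian is nonzero somewhere on every nonempty open set.
Transported to the image and extended by zero, it becomes a Radó function (continuous, and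
holomorphic off its zeros). The maximum principle for such functions bounds the inverse map by a
Lipschitz estimate where the Jacobian is nonzero, hence by continuity everywhere; and a Lipschitz
inverse forces the derivative to be invertible.
-/

section Rado

variable {E F : Type*} [NormedAddCommGroup E] [NormedSpace ℂ E] [NormedAddCommGroup F]
  [NormedSpace ℂ F]

/-- A Radó function on `U`: a continuous function that is holomorphic wherever it does not vanish.
Radó's theorem says that it is holomorphic on `U`; here the notion makes it possible to extend a
Jacobian by zero across its zero set before knowing that the extension is holomorphic. -/
structure IsRadoOn (H : E → ℂ) (U : Set E) : Prop where
  continuousOn : ContinuousOn H U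
  differentiableAt : ∀ w ∈ U, H w ≠ 0 → DifferentiableAt ℂ H w

namespace IsRadoOn

theorem comp {H : F → ℂ} {U : Set F} (hH : IsRadoOn H U) {L : E → F} (hL : Differentiable ℂ L)
    {s : Set E} (hmaps : MapsTo L s U) : IsRadoOn (fun t => H (L t)) s where
  continuousOn := hH.continuousOn.comp hL.continuous.continuousOn hmaps
  differentiableAt t ht h := (hH.differentiableAt _ (hmaps ht) h).comp t (hL t)

theorem norm_le_of_forall_mem_sphere {ψ : ℂ → ℂ} {c t : ℂ} {R A : ℝ}
    (hψ : IsRadoOn ψ (closedBall c R)) (hA : ∀ s ∈ sphere c R, ‖ψ s‖ ≤ A) (ht : t ∈ ball c R) :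
    ‖ψ t‖ ≤ A := by
  obtain ⟨s₀, hs₀⟩ := NormedSpace.sphere_nonempty (x := c).2 (pos_of_mem_ball ht).le
  have hA0 : 0 ≤ A := (norm_nonneg _).trans (hA s₀ hs₀)
  rcases eq_or_ne (ψ t) 0 with h0 | h0
  · simpa only [h0, norm_zero] using hA0
  set U : Set ℂ := ball c R ∩ ψ ⁻¹' {0}ᶜ
  have hU : IsOpen U := (hψ.continuousOn.mono ball_subset_closedBall).isOpen_inter_preimage
    isOpen_ball isOpen_compl_singleton
  have hcl : closure U ⊆ closedBall c R :=
    (closure_mono inter_subset_left).trans closure_ball_subset_closedBall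
  have hd : DiffContOnCl ℂ ψ U :=
    ⟨fun s hs => (hψ.differentiableAt s (ball_subset_closedBall hs.1)
      hs.2).differentiableWithinAt, hψ.continuousOn.mono hcl⟩
  refine Complex.norm_le_of_forall_mem_frontier_norm_le (isBounded_ball.subset inter_subset_left)
    hd (fun s hs => ?_) (subset_closure ⟨ht, h0⟩)
  rw [hU.frontier_eq] at hs
  rcases eq_or_ne (ψ s) 0 with hs0 | hs0
  · simpa only [hs0, norm_zero] using hA0
  · exact hA s (le_antisymm (hcl hs.1) (not_lt.1 fun h => hs.2 ⟨h, hs0⟩))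

/-- The maximum principle bounds `‖η t‖ * ‖q t‖ ^ k` by `A * B ^ k`; as `k → ∞` the factors `‖η t‖`
and `A` become irrelevant. -/
theorem norm_le_of_forall_mul_pow {η q : ℂ → ℂ} {c t : ℂ} {R B : ℝ}
    (h : ∀ k : ℕ, IsRadoOn (fun s => η s * q s ^ k) (closedBall c R))
    (hB : ∀ s ∈ sphere c R, ‖q s‖ ≤ B) (ht : t ∈ ball c R) (ht0 : η t ≠ 0) : ‖q t‖ ≤ B := by
  have hη : ContinuousOn η (closedBall c R) := by simpa using (h 0).continuousOn
  obtain ⟨A, hA⟩ := (isCompact_closedBall c R).exists_bound_of_continuousOn hη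
  obtain ⟨s₀, hs₀⟩ := NormedSpace.sphere_nonempty (x := c).2 (pos_of_mem_ball ht).le
  have hA0 : 0 ≤ A := (norm_nonneg _).trans (hA s₀ (sphere_subset_closedBall hs₀))
  have hB0 : 0 ≤ B := (norm_nonneg _).trans (hB s₀ hs₀)
  have hmax (k : ℕ) : ‖η t‖ * ‖q t‖ ^ k ≤ A * B ^ k := by
    rw [← norm_pow, ← norm_mul]
    refine (h k).norm_le_of_forall_mem_sphere (fun s hs => ?_) ht
    rw [norm_mul, norm_pow]
    gcongr
    exacts [hA s (sphere_subset_closedBall hs), hB s hs]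
  by_contra! hlt
  have hq : 0 < ‖q t‖ := hB0.trans_lt hlt
  have hlim : Tendsto (fun k : ℕ => A * (B / ‖q t‖) ^ k) atTop (𝓝 (A * 0)) :=
    (tendsto_pow_atTop_nhds_zero_of_lt_one (by positivity) ((div_lt_one hq).2 hlt)).const_mul A
  have hle : ‖η t‖ ≤ A * 0 := ge_of_tendsto' hlim fun k => by
    rw [div_pow, ← mul_div_assoc, le_div_iff₀ (by positivity)]
    exact hmax k
  exact ht0 (norm_le_zero_iff.1 (by simpa using hle))

theorem eq_zero_of_eventually_center {η : ℂ → ℂ} {c t : ℂ} {R : ℝ}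
    (hη : IsRadoOn η (closedBall c R)) (h0 : ∀ᶠ s in 𝓝 c, η s = 0) (ht : t ∈ ball c R) :
    η t = 0 := by
  by_contra hne
  have htc : t - c ≠ 0 := sub_ne_zero.2 fun h => hne (h ▸ h0.self_of_nhds)
  have hrado (k : ℕ) : IsRadoOn (fun s => η s * (s - c)⁻¹ ^ k) (closedBall c R) := by
    have hq (s : ℂ) (hs : s - c ≠ 0) : DifferentiableAt ℂ (fun s => (s - c)⁻¹ ^ k) s :=
      ((differentiableAt_id.sub_const c).inv hs).pow k
    refine ⟨fun s hs => ?_, fun s hs hs0 => ?_⟩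
    · rcases eq_or_ne s c with rfl | hsc
      · refine (continuousAt_const (y := (0 : ℂ)).congr ?_).continuousWithinAt
        filter_upwards [h0] with y hy using by rw [hy, zero_mul]
      · exact (hη.continuousOn s hs).mul
          (hq s (sub_ne_zero.2 hsc)).continuousAt.continuousWithinAt
    · have hsc : s - c ≠ 0 := sub_ne_zero.2 <| by
        rintro rfl
        exact hs0 (by rw [h0.self_of_nhds, zero_mul])
      exact (hη.differentiableAt s hs (left_ne_zero_of_mul hs0)).mul (hq s hsc)
  have hle : ‖(t - c)⁻¹‖ ≤ R⁻¹ := norm_le_of_forall_mul_pow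
    (q := fun s => (s - c)⁻¹) hrado (fun s hs => by rw [norm_inv, mem_sphere_iff_norm.1 hs]) ht hne
  rw [norm_inv, inv_le_inv₀ (norm_pos_iff.2 htc) (pos_of_mem_ball ht)] at hle
  exact hle.not_gt (mem_ball_iff_norm.1 ht)

end IsRadoOn

theorem mapsTo_add_smul_closedBall {y v c : E} {R r : ℝ} (h : dist y c + R * ‖v‖ < r) :
    MapsTo (fun t : ℂ => y + t • v) (closedBall 0 R) (ball c r) := by
  intro t ht
  rw [mem_closedBall_zero_iff] at ht
  calc dist (y + t • v) c ≤ dist (y + t • v) y + dist y c := dist_triangle _ _ _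
    _ = ‖t‖ * ‖v‖ + dist y c := by rw [dist_eq_norm, add_sub_cancel_left, norm_smul]
    _ ≤ R * ‖v‖ + dist y c := by gcongr
    _ < r := by rwa [add_comm]

namespace IsRadoOn

theorem eqOn_zero_of_isPreconnected {U : Set E} {H : E → ℂ} (hH : IsRadoOn H U) (hU : IsOpen U)
    (hUc : IsPreconnected U) {w₀ : E} (hw₀ : w₀ ∈ U) (h0 : ∀ᶠ w in 𝓝 w₀, H w = 0) :
    EqOn H 0 U := by
  suffices U ⊆ {w | ∀ᶠ y in 𝓝 w, H y = 0} from fun w hw => (this hw).self_of_nhds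
  refine hUc.subset_of_closure_inter_subset isOpen_setOfPred_eventually_nhds ⟨w₀, hw₀, h0⟩ ?_
  rintro w ⟨hwc, hwU⟩
  obtain ⟨r, hr, hball⟩ := Metric.isOpen_iff.1 hU w hwU
  obtain ⟨y, hy, hyw⟩ := Metric.mem_closure_iff.1 hwc (r / 3) (by positivity)
  filter_upwards [isOpen_ball.mem_nhds hyw] with v hv
  have hvy : ‖v - y‖ < r / 3 := mem_ball_iff_norm.1 hv
  have hline : MapsTo (fun t : ℂ => y + t • (v - y)) (closedBall 0 2) U :=
    (mapsTo_add_smul_closedBall (by rw [dist_comm]; linarith)).mono_right hball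
  have hy0 : ∀ᶠ t : ℂ in 𝓝 0, H (y + t • (v - y)) = 0 := by
    have hcont : ContinuousAt (fun t : ℂ => y + t • (v - y)) 0 := by fun_prop
    exact hcont.eventually (by simpa using hy)
  simpa using (hH.comp (by fun_prop) hline).eq_zero_of_eventually_center hy0 (t := 1) (by simp)

theorem norm_dslope_le {η p : ℂ → ℂ} {c t : ℂ} {R B : ℝ} (hη : IsRadoOn η (closedBall c R))
    (hp : ContinuousOn p (closedBall c R))
    (hpd : ∀ s ∈ closedBall c R, η s ≠ 0 → DifferentiableAt ℂ p s) (hc : η c ≠ 0)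
    (hB : ∀ s ∈ sphere c R, ‖p s - p c‖ ≤ B) (ht : t ∈ ball c R) (ht0 : η t ≠ 0) :
    ‖dslope p c t‖ ≤ B / R := by
  have hR : 0 < R := pos_of_mem_ball ht
  have hnhds : closedBall c R ∈ 𝓝 c := closedBall_mem_nhds c hR
  have hqc : ContinuousOn (dslope p c) (closedBall c R) :=
    (continuousOn_dslope hnhds).2 ⟨hp, hpd c (mem_of_mem_nhds hnhds) hc⟩
  have hqd (s : ℂ) (hs : s ∈ closedBall c R) (hs0 : η s ≠ 0) :
      DifferentiableAt ℂ (dslope p c) s := by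
    rcases eq_or_ne s c with rfl | hsc
    · have hmem : closedBall s R ∩ {y | η y ≠ 0} ∈ 𝓝 s :=
        inter_mem hnhds ((hη.continuousOn.continuousAt hnhds).eventually_ne hc)
      exact ((Complex.differentiableOn_dslope hmem).2
        fun y hy => (hpd y hy.1 hy.2).differentiableWithinAt).differentiableAt hmem
    · exact (differentiableAt_dslope_of_ne hsc).2 (hpd s hs hs0)
  refine norm_le_of_forall_mul_pow (η := η) (fun k => ⟨hη.continuousOn.mul (hqc.pow k), ?_⟩)
    (fun s hs => ?_) ht ht0
  · intro s hs hs0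
    have hηs : η s ≠ 0 := left_ne_zero_of_mul hs0
    exact (hη.differentiableAt s hs hηs).mul ((hqd s hs hηs).pow k)
  · have hsc : s ≠ c := ne_of_mem_sphere hs hR.ne'
    rw [dslope_of_ne _ hsc, slope_def_field, norm_div, mem_sphere_iff_norm.1 hs]
    gcongr
    exact hB s hs

/-- Restricted to the complex line through `w` and `w'`, this is the Schwarz lemma. -/
theorem norm_sub_le {H : E → ℂ} {g : E → F} {w₀ w w' : E} {z₀ : F} {δ ε : ℝ}
    (hH : IsRadoOn H (ball w₀ δ)) (hg : ContinuousOn g (ball w₀ δ))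
    (hgd : ∀ y ∈ ball w₀ δ, H y ≠ 0 → DifferentiableAt ℂ g y)
    (hb : MapsTo g (ball w₀ δ) (closedBall z₀ ε)) (hw : w ∈ ball w₀ (δ / 4))
    (hw' : w' ∈ ball w₀ (δ / 4)) (h : H w ≠ 0) (h' : H w' ≠ 0) :
    ‖g w - g w'‖ ≤ 4 * ε / δ * ‖w - w'‖ := by
  rcases eq_or_ne w w' with rfl | hne
  · simp
  have hδ : 0 < δ := by linarith [pos_of_mem_ball hw]
  set v := w - w'
  set R : ℝ := δ / (2 * ‖v‖)
  have hv : 0 < ‖v‖ := norm_pos_iff.2 (sub_ne_zero.2 hne)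
  have hRv : R * ‖v‖ = δ / 2 := by simp only [R]; field_simp
  have hR1 : 1 < R := by
    rw [one_lt_div (by positivity), ← dist_eq_norm]
    linarith [dist_triangle_right w w' w₀, mem_ball.1 hw, mem_ball.1 hw']
  have hline : MapsTo (fun t : ℂ => w' + t • v) (closedBall 0 R) (ball w₀ δ) :=
    mapsTo_add_smul_closedBall (by linarith [mem_ball.1 hw'])
  have hdiff : Differentiable ℂ fun t : ℂ => w' + t • v := by fun_prop
  obtain ⟨ℓ, hℓ, hℓv⟩ := exists_dual_vector'' ℂ (g w - g w')
  set p : ℂ → ℂ := fun t => ℓ (g (w' + t • v))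
  have hpB (t : ℂ) (ht : t ∈ sphere (0 : ℂ) R) : ‖p t - p 0‖ ≤ 2 * ε := by
    have ht' := hb (hline (sphere_subset_closedBall ht))
    have h0' := hb (hline (mem_closedBall_self (zero_le_one.trans hR1.le)))
    calc ‖p t - p 0‖ = ‖ℓ (g (w' + t • v) - g (w' + (0 : ℂ) • v))‖ := by rw [map_sub]
      _ ≤ 1 * ‖g (w' + t • v) - g (w' + (0 : ℂ) • v)‖ := ℓ.le_of_opNorm_le hℓ _
      _ ≤ 2 * ε := by
        rw [one_mul, ← dist_eq_norm, two_mul]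
        exact (dist_triangle_right _ _ z₀).trans (add_le_add ht' h0')
  have hslope : ‖dslope p 0 1‖ ≤ 2 * ε / R :=
    (hH.comp hdiff hline).norm_dslope_le
      (ℓ.continuous.comp_continuousOn (hg.comp hdiff.continuous.continuousOn hline))
      (fun s hs hs0 => ℓ.differentiableAt.comp s ((hgd _ (hline hs) hs0).comp s (hdiff s)))
      (by simpa using h') hpB (by simpa using hR1) (by simpa [v] using h)
  have hp1 : dslope p 0 1 = ‖g w - g w'‖ := by
    rw [dslope_of_ne _ one_ne_zero, slope_def_field]
    simpa [p, v] using hℓv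
  rw [hp1, Complex.norm_real, norm_norm] at hslope
  refine hslope.trans_eq ?_
  simp only [R]
  field_simp
  ring

theorem frequently_ne_zero {U : Set E} {H : E → ℂ} (hH : IsRadoOn H U) (hU : IsOpen U)
    (hUc : IsPreconnected U) {w₀ w : E} (hw₀ : w₀ ∈ U) (h0 : H w₀ ≠ 0) (hw : w ∈ U) :
    ∃ᶠ y in 𝓝 w, H y ≠ 0 := fun hev =>
  h0 (hH.eqOn_zero_of_isPreconnected hU hUc hw (hev.mono fun _ => not_not.1) hw₀)

theorem exists_lipschitzOnWith {H : E → ℂ} {g : E → F} {w₀ w₁ : E} {z₀ : F} {δ ε : ℝ}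
    (hH : IsRadoOn H (ball w₀ δ)) (hg : ContinuousOn g (ball w₀ δ))
    (hgd : ∀ y ∈ ball w₀ δ, H y ≠ 0 → DifferentiableAt ℂ g y)
    (hb : MapsTo g (ball w₀ δ) (closedBall z₀ ε)) (hw₁ : w₁ ∈ ball w₀ δ) (h₁ : H w₁ ≠ 0) :
    ∃ C, LipschitzOnWith C g (ball w₀ (δ / 4)) := by
  have hδ : 0 < δ := pos_of_mem_ball hw₁
  have hε : 0 ≤ ε := dist_nonneg.trans (hb hw₁)
  set S := ball w₀ (δ / 4) ∩ {y | H y ≠ 0}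
  have hlip : LipschitzOnWith (4 * ε / δ).toNNReal g S := by
    refine LipschitzOnWith.of_dist_le_mul fun w hw w' hw' => ?_
    rw [Real.coe_toNNReal _ (by positivity), dist_eq_norm, dist_eq_norm]
    exact hH.norm_sub_le hg hgd hb hw.1 hw'.1 hw.2 hw'.2
  have hsub : closure S ⊆ ball w₀ δ :=
    (closure_mono inter_subset_left).trans
      (closure_ball_subset_closedBall.trans (closedBall_subset_ball (by linarith)))
  have hdense : ball w₀ (δ / 4) ⊆ closure S := fun w hw => by
    have hwδ : w ∈ ball w₀ δ := ball_subset_ball (by linarith) hw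
    refine mem_closure_iff_frequently.2 ?_
    exact ((hH.frequently_ne_zero isOpen_ball (convex_ball w₀ δ).isPreconnected hw₁ h₁
      hwδ).and_eventually (isOpen_ball.mem_nhds hw)).mono fun y hy => hy.symm
  exact ⟨_, ((lipschitzOnWith_closure_iff (hg.mono hsub)).2 hlip).mono hdense⟩

end IsRadoOn

end Rado

section Weierstrass

variable {ι E F : Type*} [NormedAddCommGroup E] [NormedSpace ℂ E] [NormedAddCommGroup F]
  [NormedSpace ℂ F] {l : Filter ι} {u : ι → E → F} {U : E → F} {c : E} {r : ℝ}

theorem uniformCauchySeqOn_fderiv (hr : 0 < r)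
    (hd : ∀ᶠ j in l, DifferentiableOn ℂ (u j) (ball c r))
    (hu : UniformCauchySeqOn u l (ball c r)) :
    UniformCauchySeqOn (fun j => fderiv ℂ (u j)) l (ball c (r / 2)) := by
  intro V hV
  obtain ⟨ε, hε, hεV⟩ := Metric.mem_uniformity_dist.1 hV
  obtain ⟨δ, hδ, hδε⟩ : ∃ δ > 0, 2 * δ / (r / 2) < ε :=
    ⟨ε * r / 8, by positivity, by field_simp; norm_num⟩
  filter_upwards [hu _ (Metric.dist_mem_uniformity hδ), hd.prod_mk hd] with m hm hdm y hy
  have hsub : ball y (r / 2) ⊆ ball c r := ball_subset_ball' (by linarith [mem_ball.1 hy])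
  have hnhds : ball c r ∈ 𝓝 y :=
    mem_of_superset (ball_mem_nhds y (by positivity)) hsub
  have hmaps : MapsTo (u m.1 - u m.2) (ball y (r / 2))
      (closedBall ((u m.1 - u m.2) y) (2 * δ)) := fun z hz => by
    have hy' : dist (u m.1 y) (u m.2 y) < δ := hm y (mem_of_mem_nhds hnhds)
    have hz' : dist (u m.1 z) (u m.2 z) < δ := hm z (hsub hz)
    rw [mem_closedBall, Pi.sub_apply, Pi.sub_apply]
    rw [dist_eq_norm] at hy' hz' ⊢
    linarith [norm_sub_le (u m.1 z - u m.2 z) (u m.1 y - u m.2 y)]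
  refine hεV (lt_of_le_of_lt ?_ hδε)
  rw [dist_eq_norm,
    ← fderiv_sub (hdm.1.differentiableAt hnhds) (hdm.2.differentiableAt hnhds)]
  exact Complex.norm_fderiv_le_div_of_mapsTo_ball ((hdm.1.sub hdm.2).mono hsub) hmaps
    (by positivity)

variable [CompleteSpace F] [l.NeBot]

theorem exists_hasFDerivAt_of_tendstoUniformlyOn_ball (hr : 0 < r)
    (hd : ∀ᶠ j in l, DifferentiableOn ℂ (u j) (ball c r))
    (hu : TendstoUniformlyOn u U l (ball c r)) :
    ∃ U' : E → E →L[ℂ] F, (∀ y ∈ ball c (r / 2), HasFDerivAt U (U' y) y) ∧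
      TendstoUniformlyOn (fun j => fderiv ℂ (u j)) U' l (ball c (r / 2)) := by
  have hcauchy := uniformCauchySeqOn_fderiv hr hd hu.uniformCauchySeqOn
  have hlim (y : E) (hy : y ∈ ball c (r / 2)) : ∃ A, Tendsto (fun j => fderiv ℂ (u j) y) l (𝓝 A) :=
    CompleteSpace.complete (hcauchy.cauchy_map hy)
  choose! U' hU' using hlim
  have hunif := hcauchy.tendstoUniformlyOn_of_tendsto hU'
  refine ⟨U', fun y hy => ?_, hunif⟩
  have hsub : ball c (r / 2) ⊆ ball c r := ball_subset_ball (by linarith)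
  have hy' : ball c (r / 2) ∈ 𝓝 y := isOpen_ball.mem_nhds hy
  refine hasFDerivAt_of_tendstoUniformlyOnFilter
    ((tendstoUniformlyOn_iff_tendstoUniformlyOnFilter.1 hunif).mono_right
      (le_principal_iff.2 hy')) ?_ (eventually_of_mem hy' fun z hz => hu.tendsto_at (hsub hz))
  filter_upwards [hd.prod_mk (eventually_mem_set.2 hy')] with q hq
  exact (hq.1.differentiableAt (isOpen_ball.mem_nhds (hsub hq.2))).hasFDerivAt

theorem exists_hasFDerivAt_of_tendstoLocallyUniformlyOn [LocallyCompactSpace E] {D : Set E}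
    (hD : IsOpen D) (hd : ∀ z ∈ D, ∀ᶠ q in l ×ˢ 𝓝 z, DifferentiableAt ℂ (u q.1) q.2)
    (hu : TendstoLocallyUniformlyOn u U l D) {z : E} (hz : z ∈ D) :
    ∃ U' : E → E →L[ℂ] F, ∃ V ∈ 𝓝 z, (∀ y ∈ V, HasFDerivAt U (U' y) y) ∧
      TendstoUniformlyOn (fun j => fderiv ℂ (u j)) U' l V := by
  obtain ⟨P, hP, r₁, hr₁, hPd⟩ := eventually_prod_nhds_iff.1 (hd z hz)
  obtain ⟨K, hK, hKD, hKc⟩ := local_compact_nhds (hD.mem_nhds hz)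
  obtain ⟨r, hr, hsub⟩ := Metric.mem_nhds_iff.1 (inter_mem hK (ball_mem_nhds z hr₁))
  have hunif : TendstoUniformlyOn u U l (ball z r) :=
    ((tendstoLocallyUniformlyOn_iff_forall_isCompact hD).1 hu K hKD hKc).mono
      fun y hy => (hsub hy).1
  have hdiff : ∀ᶠ j in l, DifferentiableOn ℂ (u j) (ball z r) :=
    hP.mono fun j hj y hy => (hPd hj (hsub hy).2).differentiableWithinAt
  obtain ⟨U', hU'⟩ := exists_hasFDerivAt_of_tendstoUniformlyOn_ball hr hdiff hunif
  exact ⟨U', _, ball_mem_nhds z (half_pos hr), hU'⟩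

theorem differentiableOn_of_tendstoLocallyUniformlyOn [LocallyCompactSpace E] {D : Set E}
    (hD : IsOpen D) (hd : ∀ z ∈ D, ∀ᶠ q in l ×ˢ 𝓝 z, DifferentiableAt ℂ (u q.1) q.2)
    (hu : TendstoLocallyUniformlyOn u U l D) : DifferentiableOn ℂ U D := fun z hz => by
  obtain ⟨U', V, hV, hU', -⟩ := exists_hasFDerivAt_of_tendstoLocallyUniformlyOn hD hd hu hz
  exact (hU' z (mem_of_mem_nhds hV)).differentiableAt.differentiableWithinAt

theorem tendstoLocallyUniformlyOn_fderiv [LocallyCompactSpace E] {D : Set E}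
    (hD : IsOpen D) (hd : ∀ z ∈ D, ∀ᶠ q in l ×ˢ 𝓝 z, DifferentiableAt ℂ (u q.1) q.2)
    (hu : TendstoLocallyUniformlyOn u U l D) :
    TendstoLocallyUniformlyOn (fun j => fderiv ℂ (u j)) (fderiv ℂ U) l D := fun S hS z hz => by
  obtain ⟨U', V, hV, hU', hunif⟩ := exists_hasFDerivAt_of_tendstoLocallyUniformlyOn hD hd hu hz
  exact ⟨V, mem_nhdsWithin_of_mem_nhds hV,
    hunif.congr_right (fun y hy => (hU' y hy).fderiv.symm) S hS⟩

end Weierstrass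

section Derivative

variable {E F : Type*} [NormedAddCommGroup E] [NormedSpace ℂ E] [NormedAddCommGroup F]
  [NormedSpace ℂ F]

theorem norm_sub_sub_fderiv_le_of_mapsTo_ball {f : E → F} {z w : E} {r C : ℝ}
    (hf : DifferentiableOn ℂ f (ball z r)) (hb : MapsTo f (ball z r) (closedBall (f z) C))
    (hw : w ∈ ball z r) : ‖f w - f z - fderiv ℂ f z (w - z)‖ ≤ 2 * C * (‖w - z‖ / r) ^ 2 := by
  have hr : 0 < r := pos_of_mem_ball hw
  have hC : ‖fderiv ℂ f z‖ ≤ C / r := Complex.norm_fderiv_le_div_of_mapsTo_ball hf hb hr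
  set φ : E → F := fun y => f y - fderiv ℂ f z (y - z)
  have hφ (y : E) : φ y - φ z = f y - f z - fderiv ℂ f z (y - z) := by
    simp only [φ, sub_self, map_zero, sub_zero]
    exact sub_right_comm _ _ _
  have hmaps : MapsTo φ (ball z r) (closedBall (φ z) (2 * C)) := fun y hy => by
    have hlin : ‖fderiv ℂ f z (y - z)‖ ≤ C / r * r :=
      (fderiv ℂ f z).le_of_opNorm_le_of_le hC (mem_ball_iff_norm.1 hy).le
    rw [div_mul_cancel₀ _ hr.ne'] at hlin
    rw [mem_closedBall_iff_norm, hφ]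
    linarith [norm_sub_le (f y - f z) (fderiv ℂ f z (y - z)), mem_closedBall_iff_norm.1 (hb hy)]
  have hlittle : (fun y => φ y - φ z) =o[𝓝 z] fun y => ‖y - z‖ ^ 1 := by
    simp only [hφ, pow_one]
    exact (hf.differentiableAt (ball_mem_nhds z hr)).hasFDerivAt.isLittleO.norm_right
  have hφd : DifferentiableOn ℂ φ (ball z r) := hf.sub (by fun_prop)
  simpa only [dist_eq_norm, hφ, one_add_one_eq_two] using
    Complex.dist_le_mul_div_pow_of_mapsTo_ball_of_isLittleO hφd hmaps hlittle hw

theorem tendstoUniformlyOn_inv_smul_sub {f : E → F} {c : E} {r C : ℝ} (hr : 0 < r)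
    (hf : DifferentiableOn ℂ f (ball c (2 * r)))
    (hb : MapsTo f (ball c (2 * r)) (closedBall (f c) C)) (v : E) :
    TendstoUniformlyOn (fun (t : ℂ) z => t⁻¹ • (f (z + t • v) - f z)) (fun z => fderiv ℂ f z v)
      (𝓝[≠] 0) (ball c r) := by
  have hsub (z : E) (hz : z ∈ ball c r) : ball z r ⊆ ball c (2 * r) :=
    ball_subset_ball' (by linarith [mem_ball.1 hz])
  have htaylor (z : E) (hz : z ∈ ball c r) (t : ℂ) (ht : ‖t • v‖ < r) :
      ‖f (z + t • v) - f z - t • fderiv ℂ f z v‖ ≤ 2 * (2 * C) * (‖t • v‖ / r) ^ 2 := by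
    have hmaps : MapsTo f (ball z r) (closedBall (f z) (2 * C)) := fun y hy => by
      have hyC : dist (f y) (f c) ≤ C := hb (hsub z hz hy)
      have hzC : dist (f z) (f c) ≤ C := hb (hsub z hz (mem_ball_self hr))
      rw [mem_closedBall]
      linarith [dist_triangle_right (f y) (f z) (f c)]
    simpa using norm_sub_sub_fderiv_le_of_mapsTo_ball (hf.mono (hsub z hz)) hmaps
      (w := z + t • v) (by simpa using ht)
  rw [Metric.tendstoUniformlyOn_iff]
  intro ε hε
  have hsmall : ∀ᶠ t : ℂ in 𝓝[≠] 0, ‖t • v‖ < r :=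
    (Continuous.tendsto' (by fun_prop) 0 0 (by simp) : Tendsto (fun t : ℂ => ‖t • v‖) (𝓝 0)
      (𝓝 0)).eventually (gt_mem_nhds hr) |>.filter_mono nhdsWithin_le_nhds
  have hlim : ∀ᶠ t : ℂ in 𝓝[≠] 0, 2 * (2 * C) * (‖v‖ / r) ^ 2 * ‖t‖ < ε :=
    (Continuous.tendsto' (by fun_prop) 0 0 (by simp) : Tendsto (fun t : ℂ =>
      2 * (2 * C) * (‖v‖ / r) ^ 2 * ‖t‖) (𝓝 0) (𝓝 0)).eventually (gt_mem_nhds hε)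
      |>.filter_mono nhdsWithin_le_nhds
  filter_upwards [hsmall, hlim, self_mem_nhdsWithin] with t ht htε ht0 z hz
  have ht0' : t ≠ 0 := ht0
  have hid : t⁻¹ • (f (z + t • v) - f z) - fderiv ℂ f z v
      = t⁻¹ • (f (z + t • v) - f z - t • fderiv ℂ f z v) := by
    rw [smul_sub t⁻¹ _ (t • _), inv_smul_smul₀ ht0']
  calc dist (fderiv ℂ f z v) (t⁻¹ • (f (z + t • v) - f z))
      = ‖t‖⁻¹ * ‖f (z + t • v) - f z - t • fderiv ℂ f z v‖ := by
        rw [dist_comm, dist_eq_norm, hid, norm_smul, norm_inv]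
    _ ≤ ‖t‖⁻¹ * (2 * (2 * C) * (‖t • v‖ / r) ^ 2) := by gcongr; exact htaylor z hz t ht
    _ = 2 * (2 * C) * (‖v‖ / r) ^ 2 * ‖t‖ := by rw [norm_smul]; field_simp
    _ < ε := htε

theorem differentiableOn_fderiv_apply [CompleteSpace F] {f : E → F} {U : Set E} (hU : IsOpen U)
    (hf : DifferentiableOn ℂ f U) (v : E) : DifferentiableOn ℂ (fun z => fderiv ℂ f z v) U := by
  intro c hc
  have hfc : ContinuousAt f c := hf.continuousOn.continuousAt (hU.mem_nhds hc)
  obtain ⟨R, hR, hball⟩ := Metric.mem_nhds_iff.1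
    (inter_mem (hU.mem_nhds hc) (hfc.preimage_mem_nhds (closedBall_mem_nhds (f c) one_pos)))
  obtain ⟨r, rfl⟩ : ∃ r, 2 * r = R := ⟨R / 2, by ring⟩
  have hr : 0 < r := by linarith
  have hfR : DifferentiableOn ℂ f (ball c (2 * r)) := hf.mono fun y hy => (hball hy).1
  have hquot : ∀ᶠ t : ℂ in 𝓝[≠] 0,
      DifferentiableOn ℂ (fun z => t⁻¹ • (f (z + t • v) - f z)) (ball c r) := by
    have hsmall : ∀ᶠ t : ℂ in 𝓝 0, ‖t • v‖ < r :=
      ContinuousAt.eventually_lt (by fun_prop) continuousAt_const (by simpa using hr)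
    filter_upwards [hsmall.filter_mono nhdsWithin_le_nhds] with t ht
    have hshift : MapsTo (fun z => z + t • v) (ball c r) (ball c (2 * r)) := fun z hz => by
      rw [mem_ball_iff_norm] at hz ⊢
      rw [add_sub_right_comm]
      linarith [norm_add_le (z - c) (t • v)]
    exact ((hfR.comp (by fun_prop) hshift).sub
      (hfR.mono (ball_subset_ball (by linarith)))).const_smul _
  obtain ⟨U', hU', -⟩ := exists_hasFDerivAt_of_tendstoUniformlyOn_ball hr hquot
    (tendstoUniformlyOn_inv_smul_sub hr hfR (fun y hy => (hball hy).2) v)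
  exact (hU' c (mem_ball_self (half_pos hr))).differentiableAt.differentiableWithinAt

variable [FiniteDimensional ℂ E]

theorem differentiableOn_fderiv [CompleteSpace F] {f : E → F} {U : Set E} (hU : IsOpen U)
    (hf : DifferentiableOn ℂ f U) : DifferentiableOn ℂ (fderiv ℂ f) U := by
  let b := Module.finBasis ℂ E
  have hrep : fderiv ℂ f = fun z => ∑ i, (LinearMap.toContinuousLinearMap (b.coord i)).smulRight
      (fderiv ℂ f z (b i)) := by
    ext z v
    conv_lhs => rw [← b.sum_repr v, map_sum]
    simp
  rw [hrep]
  exact DifferentiableOn.fun_sum fun i _ => (ContinuousLinearMap.smulRightL ℂ E F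
    (LinearMap.toContinuousLinearMap (b.coord i))).differentiable.comp_differentiableOn
      (differentiableOn_fderiv_apply hU hf (b i))

theorem contDiffAt_one_of_differentiableOn [CompleteSpace F] {f : E → F} {U : Set E}
    (hU : IsOpen U) (hf : DifferentiableOn ℂ f U) {z : E} (hz : z ∈ U) : ContDiffAt ℂ 1 f z := by
  refine contDiffAt_one_iff.2 ⟨fderiv ℂ f, U, hU.mem_nhds hz,
    (differentiableOn_fderiv hU hf).continuousOn, fun y hy => ?_⟩
  exact (hf.differentiableAt (hU.mem_nhds hy)).hasFDerivAt

theorem differentiable_det : Differentiable ℂ fun A : E →L[ℂ] E => A.det := by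
  let b := Module.finBasis ℂ E
  have hrep (A : E →L[ℂ] E) : A.det = ∑ σ : Equiv.Perm (Fin (Module.finrank ℂ E)),
      ((Equiv.Perm.sign σ : ℤ) : ℂ) *
        ∏ i, LinearMap.toContinuousLinearMap (b.coord (σ i)) (A (b i)) := by
    rw [ContinuousLinearMap.det, ← LinearMap.det_toMatrix b, Matrix.det_apply']
    simp [LinearMap.toMatrix_apply]
  simp only [hrep]
  fun_prop

theorem differentiableOn_det_fderiv {f : E → E} {U : Set E} (hU : IsOpen U)
    (hf : DifferentiableOn ℂ f U) : DifferentiableOn ℂ (fun z => (fderiv ℂ f z).det) U :=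
  Differentiable.comp_differentiableOn (g := fun A : E →L[ℂ] E => A.det) differentiable_det
    (differentiableOn_fderiv hU hf)

end Derivative

section ConstantRank

variable {𝕜 E F G : Type*} [RCLike 𝕜] [NormedAddCommGroup E] [NormedSpace 𝕜 E]
  [NormedAddCommGroup F] [NormedSpace 𝕜 F] [NormedAddCommGroup G] [NormedSpace 𝕜 G]
  [CompleteSpace G]

theorem exists_contDiffAt_fibre_parametrization [CompleteSpace E] {φ : E → G} {A : E →L[𝕜] G}
    {z : E} (hφ : ContDiffAt 𝕜 1 φ z) (hA : HasFDerivAt φ A z) (hsurj : A.range = ⊤)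
    (hker : A.ker.ClosedComplemented) :
    ∃ (g : A.ker → E) (ρ : E → A.ker), ContDiffAt 𝕜 1 g 0 ∧ g 0 = z ∧
      ∀ᶠ k in 𝓝 0, φ (g k) = φ z ∧ ρ (g k) = k := by
  let data := HasStrictFDerivAt.implicitFunctionDataOfComplemented φ A
    (hφ.hasStrictFDerivAt' hA one_ne_zero) hsurj hker
  have hright : data.rightFun z = 0 := by simp [data]
  have hpt : data.prodFun data.pt = (φ z, 0) := Prod.ext rfl hright
  have hincl : ContDiffAt 𝕜 1 (fun k : A.ker => (φ z, k)) 0 := by fun_prop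
  have hsmooth : ContDiffAt 𝕜 1 data.implicitFunction.uncurry (φ z, 0) := by
    rw [← hpt]
    refine ImplicitFunctionData.contDiffAt_implicitFunction hφ ?_ one_ne_zero
    simp only [data, HasStrictFDerivAt.implicitFunctionDataOfComplemented]
    fun_prop
  refine ⟨data.implicitFunction (φ z), data.rightFun, hsmooth.comp 0 hincl, ?_, ?_⟩
  · have h := data.implicitFunction_apply_image.self_of_nhds
    exact hright ▸ h
  · have h := data.prodFun_implicitFunction
    rw [hpt] at h
    filter_upwards [hincl.continuousAt.eventually h] with k hk using Prod.ext_iff.1 hk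

variable [FiniteDimensional 𝕜 E]

/-- Along a fibre of `π ∘ f` of positive dimension, `π` kills the derivative of `f`; so that
derivative vanishes, and `f` is constant on the fibre. -/
theorem not_injOn_of_eventually_ker_comp_le {f : E → F} {z : E} {V : Set E} (hV : V ∈ 𝓝 z)
    (hf : ContDiffAt 𝕜 1 f z) {π : F →L[𝕜] G} (hsurj : (π ∘L fderiv 𝕜 f z).range = ⊤)
    (hker : ∀ᶠ y in 𝓝 z, (π ∘L fderiv 𝕜 f y).ker ≤ (fderiv 𝕜 f y).ker)
    (hz : (π ∘L fderiv 𝕜 f z).ker ≠ ⊥) : ¬ InjOn f V := fun hinj => by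
  have : CompleteSpace E := FiniteDimensional.complete 𝕜 E
  obtain ⟨g, ρ, hg, hg0, hρ⟩ := exists_contDiffAt_fibre_parametrization
    (π.contDiff.contDiffAt.comp z hf)
    (π.hasFDerivAt.comp z (hf.differentiableAt one_ne_zero).hasFDerivAt) hsurj
    (Submodule.ClosedComplemented.of_finiteDimensional _)
  have hgz : Tendsto g (𝓝 0) (𝓝 z) := by
    simpa only [hg0] using hg.continuousAt.tendsto
  have hfg : ∀ᶠ k in 𝓝 0, ContDiffAt 𝕜 1 f (g k) := hgz.eventually (hf.eventually (by simp))
  have hderiv : ∀ᶠ k in 𝓝 0, HasFDerivAt (𝕜 := 𝕜) (f ∘ g) 0 k := by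
    filter_upwards [hg.eventually (by simp), hfg, hgz.eventually hker, hρ.eventually_nhds]
      with k hgk hfk hkerk hconst
    have hcomp := (hfk.differentiableAt one_ne_zero).hasFDerivAt.comp k
      (hgk.differentiableAt one_ne_zero).hasFDerivAt
    have hzero : π ∘L (fderiv 𝕜 f (g k) ∘L fderiv 𝕜 g k) = 0 :=
      (π.hasFDerivAt.comp k hcomp).unique
        ((hasFDerivAt_const (π (f z)) k).congr_of_eventuallyEq (hconst.mono fun _ h => h.1))
    have hvanish : fderiv 𝕜 f (g k) ∘L fderiv 𝕜 g k = 0 :=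
      ContinuousLinearMap.ext fun v => hkerk (DFunLike.congr_fun hzero v)
    exact hvanish ▸ hcomp
  let _ := NormedSpace.restrictScalars ℝ 𝕜 (π ∘L fderiv 𝕜 f z).ker
  obtain ⟨ε, hε, hball⟩ := Metric.eventually_nhds_iff_ball.1
    ((hderiv.and hρ).and (hgz.eventually hV))
  have hconst {k} (hk : k ∈ ball 0 ε) : f (g k) = f (g 0) :=
    isOpen_ball.is_const_of_fderiv_eq_zero (convex_ball 0 ε).isPreconnected
      (fun k hk => (hball k hk).1.1.differentiableAt.differentiableWithinAt)
      (fun k hk => (hball k hk).1.1.fderiv) hk (mem_ball_self hε)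
  have : Nontrivial (π ∘L fderiv 𝕜 f z).ker := Submodule.nontrivial_iff_ne_bot.2 hz
  have := Module.punctured_nhds_neBot 𝕜 (π ∘L fderiv 𝕜 f z).ker 0
  obtain ⟨k, hk, hk0⟩ := (𝓝[≠] (0 : (π ∘L fderiv 𝕜 f z).ker)).nonempty_of_mem
    (inter_mem (mem_nhdsWithin_of_mem_nhds (ball_mem_nhds 0 hε)) self_mem_nhdsWithin)
  have h0 := hball 0 (mem_ball_self hε)
  have hgk : g k = g 0 := hinj (hball k hk).2 h0.2 (hconst hk)
  exact hk0 ((hball k hk).1.2.2.symm.trans ((congrArg ρ hgk).trans h0.1.2.2))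

theorem exists_ker_fderiv_eq_bot_of_injOn {f : E → F} {U : Set E} (hU : IsOpen U)
    (hne : U.Nonempty) (hf : ContDiffOn 𝕜 1 f U) (hinj : InjOn f U) :
    ∃ z ∈ U, (fderiv 𝕜 f z).ker = ⊥ := by
  set z := Function.argminOn (fun z => Module.finrank 𝕜 (fderiv 𝕜 f z).ker) U hne
  have hz : z ∈ U := Function.argminOn_mem _ U hne
  refine ⟨z, hz, ?_⟩
  by_contra hker
  set A := fderiv 𝕜 f z
  obtain ⟨π, hπ⟩ := Submodule.ClosedComplemented.of_finiteDimensional A.range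
  have hπA (v : E) : π (A v) = ⟨A v, v, rfl⟩ := hπ ⟨A v, v, rfl⟩
  have hsurj : (π ∘L A).range = ⊤ := by
    rw [LinearMap.range_eq_top]
    rintro ⟨_, v, rfl⟩
    exact ⟨v, hπA v⟩
  have hcont : ContinuousAt (fun y => π ∘L fderiv 𝕜 f y) z :=
    continuousAt_const.clm_comp
      ((hf.continuousOn_fderiv_of_isOpen hU le_rfl).continuousAt (hU.mem_nhds hz))
  have hrank : ∀ᶠ y in 𝓝 z,
      (Module.finrank 𝕜 A.range : Cardinal) ≤ (π ∘L fderiv 𝕜 f y : E →ₗ[𝕜] A.range).rank := by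
    refine hcont.eventually ((isOpen_setOfPred_nat_le_rank _).mem_nhds ?_)
    rw [mem_ofPred_eq, LinearMap.rank, hsurj, rank_top, Module.finrank_eq_rank]
  refine not_injOn_of_eventually_ker_comp_le (hU.mem_nhds hz) (hf.contDiffAt (hU.mem_nhds hz))
    hsurj ?_ ?_ hinj
  · filter_upwards [hrank, hU.mem_nhds hz] with y hy hyU
    refine (Submodule.eq_of_le_of_finrank_le (LinearMap.ker_le_ker_comp _ _) ?_).ge
    have hrank : Module.finrank 𝕜 A.range ≤ Module.finrank 𝕜 (π ∘L fderiv 𝕜 f y).range := by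
      rw [← Nat.cast_le (α := Cardinal), Module.finrank_eq_rank 𝕜 (π ∘L fderiv 𝕜 f y).range]
      exact hy
    have hmin : Module.finrank 𝕜 A.ker ≤ Module.finrank 𝕜 (fderiv 𝕜 f y).ker :=
      Function.argminOn_le (fun z => Module.finrank 𝕜 (fderiv 𝕜 f z).ker) U hyU
    have := LinearMap.finrank_range_add_finrank_ker (A : E →ₗ[𝕜] F)
    have := LinearMap.finrank_range_add_finrank_ker (π ∘L fderiv 𝕜 f y : E →ₗ[𝕜] A.range)
    change Module.finrank 𝕜 (π ∘L fderiv 𝕜 f y).ker ≤ _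
    lia
  · exact ne_bot_of_le_ne_bot hker (LinearMap.ker_le_ker_comp _ _)

end ConstantRank

section Osgood

theorem continuousOn_invFunOn_image {X Y : Type*} [TopologicalSpace X] [Nonempty X]
    [TopologicalSpace Y] [T2Space Y] {K : Set X} (hK : IsCompact K) {f : X → Y}
    (hf : ContinuousOn f K) (hinj : InjOn f K) :
    ContinuousOn (Function.invFunOn f K) (f '' K) := by
  rw [continuousOn_iff_isClosed]
  refine fun t ht => ⟨f '' (K ∩ t), ((hK.inter_right ht).image_of_continuousOn
    (hf.mono inter_subset_left)).isClosed, ?_⟩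
  ext w
  rw [mem_inter_iff, mem_inter_iff, and_congr_left_iff]
  rintro ⟨z, hz, rfl⟩
  rw [mem_preimage, hinj.leftInvOn_invFunOn hz, hinj.mem_image_iff inter_subset_left hz,
    mem_inter_iff, and_iff_right hz]

theorem compl_image_sdiff_interior_mem_nhds {X Y : Type*} [TopologicalSpace X] [TopologicalSpace Y]
    [T2Space Y] {K : Set X} (hK : IsCompact K) {f : X → Y} (hf : ContinuousOn f K)
    (hinj : InjOn f K) {x : X} (hx : K ∈ 𝓝 x) : (f '' (K \ interior K))ᶜ ∈ 𝓝 (f x) := by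
  refine ((hK.diff isOpen_interior).image_of_continuousOn
    (hf.mono sdiff_subset)).isClosed.isOpen_compl.mem_nhds ?_
  rw [mem_compl_iff, hinj.mem_image_iff sdiff_subset (mem_of_mem_nhds hx)]
  exact fun h => h.2 (mem_interior_iff_mem_nhds.2 hx)

theorem continuousAt_indicator_of_eq_zero {X Y : Type*} [TopologicalSpace X] [TopologicalSpace Y]
    [Zero Y] {s : Set X} (hs : IsClosed s) {φ : X → Y} (hφ : ContinuousOn φ s) {x : X}
    (h0 : s.indicator φ x = 0) : ContinuousAt (s.indicator φ) x := by
  rw [← continuousWithinAt_univ, ← union_compl_self s]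
  refine ContinuousWithinAt.union ?_ ?_
  · by_cases hx : x ∈ s
    · exact (hφ x hx).congr (fun y hy => indicator_of_mem hy φ) (indicator_of_mem hx φ)
    · exact continuousWithinAt_of_notMem_closure (by rwa [hs.closure_eq])
  · exact continuousWithinAt_const.congr (fun y hy => indicator_of_notMem hy φ) h0

variable {E : Type*} [NormedAddCommGroup E] [NormedSpace ℂ E] {f g : E → E}
  {K U Ω : Set E} {w z : E}

/-- The Jacobian of `f` transported to the target: the function `f z ↦ det f'(z)` on `f '' K`,
extended by zero. Near interior points of `K` it is a Radó function before the inverse of `f` is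
known to be holomorphic. -/
noncomputable def imageJacobian (f : E → E) (K : Set E) : E → ℂ :=
  (f '' K).indicator fun w => (fderiv ℂ f (Function.invFunOn f K w)).det

theorem imageJacobian_apply (hinj : InjOn f K) (hz : z ∈ K) :
    imageJacobian f K (f z) = (fderiv ℂ f z).det := by
  rw [imageJacobian, indicator_of_mem (mem_image_of_mem f hz), hinj.leftInvOn_invFunOn hz]

variable [FiniteDimensional ℂ E]

theorem exists_det_fderiv_ne_zero_of_injOn (hU : IsOpen U) (hne : U.Nonempty)
    (hf : DifferentiableOn ℂ f U) (hinj : InjOn f U) : ∃ z ∈ U, (fderiv ℂ f z).det ≠ 0 := by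
  obtain ⟨z, hz, hker⟩ := exists_ker_fderiv_eq_bot_of_injOn (𝕜 := ℂ) hU hne
    (fun z hz => (contDiffAt_one_of_differentiableOn hU hf hz).contDiffWithinAt) hinj
  exact ⟨z, hz, fun hdet => (LinearMap.bot_lt_ker_of_det_eq_zero hdet).ne' hker⟩

theorem image_mem_nhds_and_differentiableAt_invFunOn (hf : ContDiffAt ℂ 1 f z)
    (hdet : (fderiv ℂ f z).det ≠ 0) (hK : K ∈ 𝓝 z) (hinj : InjOn f K) :
    f '' K ∈ 𝓝 (f z) ∧ DifferentiableAt ℂ (Function.invFunOn f K) (f z) := by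
  let e := (fderiv ℂ f z).toContinuousLinearEquivOfDetNeZero hdet
  have hstrict : HasStrictFDerivAt f (e : E →L[ℂ] E) z := hf.hasStrictFDerivAt one_ne_zero
  have hdiff := hstrict.to_localInverse.differentiableAt
  have hmem : ∀ᶠ w in 𝓝 (f z), hstrict.localInverse f e z w ∈ K :=
    hdiff.continuousAt.eventually (by rwa [hstrict.localInverse_apply_image])
  constructor
  · filter_upwards [hstrict.eventually_right_inverse, hmem] with w hfw hw using ⟨_, hw, hfw⟩
  · refine hdiff.congr_of_eventuallyEq ?_
    filter_upwards [hstrict.eventually_right_inverse, hmem] with w hfw hw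
    exact (congrArg _ hfw).symm.trans (hinj.leftInvOn_invFunOn hw)

/-- If the derivative of `f` were not onto, some linear form `φ ≠ 0` would vanish on its range; but
`φ w = φ (f (g w))` would then have derivative `0`. -/
theorem det_fderiv_ne_zero_of_isBigO (hf : DifferentiableAt ℂ f (g w))
    (hfg : ∀ᶠ y in 𝓝 w, f (g y) = y) (hg : (fun y => g y - g w) =O[𝓝 w] fun y => y - w) :
    (fderiv ℂ f (g w)).det ≠ 0 := by
  intro hdet
  set A := fderiv ℂ f (g w)
  obtain ⟨φ, hφ0, hφ⟩ := Submodule.exists_le_ker_of_lt_top _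
    (LinearMap.range_lt_top_of_det_eq_zero hdet)
  let φ' : E →L[ℂ] ℂ := LinearMap.toContinuousLinearMap φ
  have hgc : Tendsto g (𝓝 w) (𝓝 (g w)) :=
    tendsto_sub_nhds_zero_iff.1 (hg.trans_tendsto (tendsto_sub_nhds_zero_iff.2 tendsto_id))
  have hrem : (fun y => f (g y) - f (g w) - A (g y - g w)) =o[𝓝 w] fun y => y - w :=
    (hf.hasFDerivAt.isLittleO.comp_tendsto hgc).trans_isBigO hg
  have hderiv : HasFDerivAt φ' (0 : E →L[ℂ] ℂ) w := by
    refine .of_isLittleO (((φ'.isBigO_comp _ _).trans_isLittleO hrem).congr' ?_ .rfl)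
    filter_upwards [hfg] with y hy
    have hφA : φ' (A (g y - g w)) = 0 := hφ ⟨_, rfl⟩
    rw [hy, hfg.self_of_nhds, map_sub, map_sub φ', hφA, zero_apply]
  refine hφ0 (LinearMap.ext fun v => ?_)
  exact DFunLike.congr_fun (φ'.hasFDerivAt.unique hderiv) v

section ImageJacobian

variable (hΩ : IsOpen Ω) (hf : DifferentiableOn ℂ f Ω) (hKΩ : K ⊆ Ω) (hinj : InjOn f K)
include hf hKΩ hinj

theorem exists_imageJacobian_ne_zero (hU : IsOpen U) (hKz : K ∈ 𝓝 z) (hfz : f z ∈ U) :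
    ∃ w ∈ U, imageJacobian f K w ≠ 0 := by
  have hfK : DifferentiableOn ℂ f (interior K) := hf.mono (interior_subset.trans hKΩ)
  obtain ⟨y, hy, hdet⟩ := exists_det_fderiv_ne_zero_of_injOn
    (hfK.continuousOn.isOpen_inter_preimage isOpen_interior hU)
    ⟨z, mem_interior_iff_mem_nhds.2 hKz, hfz⟩ (hfK.mono inter_subset_left)
    (hinj.mono (inter_subset_left.trans interior_subset))
  refine ⟨f y, hy.2, ?_⟩
  rwa [imageJacobian_apply hinj (interior_subset hy.1)]

include hΩ

theorem differentiableAt_invFunOn_of_imageJacobian_ne_zero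
    (hKU : ∀ z ∈ K, f z ∈ U → K ∈ 𝓝 z) (hw : w ∈ U) (h : imageJacobian f K w ≠ 0) :
    f '' K ∈ 𝓝 w ∧ DifferentiableAt ℂ (Function.invFunOn f K) w := by
  obtain ⟨z, hz, rfl⟩ := mem_of_indicator_ne_zero h
  rw [imageJacobian_apply hinj hz] at h
  exact image_mem_nhds_and_differentiableAt_invFunOn
    (contDiffAt_one_of_differentiableOn hΩ hf (hKΩ hz)) h (hKU z hz hw) hinj

theorem isRadoOn_imageJacobian (hK : IsCompact K) (hKU : ∀ z ∈ K, f z ∈ U → K ∈ 𝓝 z) :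
    IsRadoOn (imageJacobian f K) U := by
  have hdet := differentiableOn_det_fderiv hΩ hf
  have hfK : ContinuousOn f K := hf.continuousOn.mono hKΩ
  have hmem {w : E} (hw : w ∈ f '' K) : Function.invFunOn f K w ∈ Ω :=
    hKΩ (Function.invFunOn_mem hw)
  have hdiff : ∀ w ∈ U, imageJacobian f K w ≠ 0 → DifferentiableAt ℂ (imageJacobian f K) w := by
    intro w hw hne
    obtain ⟨hnhds, hinv⟩ :=
      differentiableAt_invFunOn_of_imageJacobian_ne_zero hΩ hf hKΩ hinj hKU hw hne
    refine ((hdet.differentiableAt (hΩ.mem_nhds (hmem (mem_of_indicator_ne_zero hne)))).comp w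
      hinv).congr_of_eventuallyEq ?_
    filter_upwards [hnhds] with y hy using indicator_of_mem hy _
  refine ⟨fun w hw => ContinuousAt.continuousWithinAt ?_, hdiff⟩
  by_cases h0 : imageJacobian f K w = 0
  · exact continuousAt_indicator_of_eq_zero (hK.image_of_continuousOn hfK).isClosed
      (hdet.continuousOn.comp (continuousOn_invFunOn_image hK hfK hinj) fun y hy => hmem hy) h0
  · exact (hdiff w hw h0).continuousAt

theorem subset_image_and_exists_lipschitzOnWith_invFunOn {δ : ℝ} (hK : IsCompact K) (hδ : 0 < δ)
    (hKz : K ∈ 𝓝 z) (hKδ : ∀ y ∈ K, f y ∈ ball (f z) δ → K ∈ 𝓝 y) :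
    ball (f z) δ ⊆ f '' K ∧
      ∃ C, LipschitzOnWith C (Function.invFunOn f K) (ball (f z) (δ / 4)) := by
  have hfK : ContinuousOn f K := hf.continuousOn.mono hKΩ
  have hrado := isRadoOn_imageJacobian hΩ hf hKΩ hinj hK hKδ
  obtain ⟨w₁, hw₁, h₁⟩ := exists_imageJacobian_ne_zero hf hKΩ hinj isOpen_ball hKz
    (mem_ball_self (x := f z) hδ)
  have hsub : ball (f z) δ ⊆ f '' K := fun w hw => by
    by_contra hwK
    refine hrado.frequently_ne_zero isOpen_ball (convex_ball (f z) δ).isPreconnected hw₁ h₁ hw ?_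
    filter_upwards [(hK.image_of_continuousOn hfK).isClosed.isOpen_compl.mem_nhds hwK] with y hy
    exact not_not.2 (indicator_of_notMem hy _)
  obtain ⟨ε, hKε⟩ := hK.isBounded.subset_closedBall 0
  exact ⟨hsub, hrado.exists_lipschitzOnWith
    ((continuousOn_invFunOn_image hK hfK hinj).mono hsub)
    (fun y hy hne =>
      (differentiableAt_invFunOn_of_imageJacobian_ne_zero hΩ hf hKΩ hinj hKδ hy hne).2)
    (fun y hy => hKε (Function.invFunOn_mem (hsub hy))) hw₁ h₁⟩

end ImageJacobian

theorem det_fderiv_ne_zero_of_injOn (hΩ : IsOpen Ω) (hf : DifferentiableOn ℂ f Ω)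
    (hinj : InjOn f Ω) (hz : z ∈ Ω) : (fderiv ℂ f z).det ≠ 0 := by
  obtain ⟨K, hKz, hKΩ, hK⟩ := local_compact_nhds (hΩ.mem_nhds hz)
  have hzK : z ∈ K := mem_of_mem_nhds hKz
  obtain ⟨δ, hδ, hKδ⟩ := Metric.mem_nhds_iff.1 (compl_image_sdiff_interior_mem_nhds hK
    (hf.continuousOn.mono hKΩ) (hinj.mono hKΩ) hKz)
  obtain ⟨hsub, C, hC⟩ := subset_image_and_exists_lipschitzOnWith_invFunOn hΩ hf hKΩ
    (hinj.mono hKΩ) hK hδ hKz fun y hy hyδ => by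
      by_contra hyK
      exact hKδ hyδ (mem_image_of_mem f ⟨hy, fun h => hyK (mem_interior_iff_mem_nhds.1 h)⟩)
  have hleft : Function.invFunOn f K (f z) = z := (hinj.mono hKΩ).leftInvOn_invFunOn hzK
  have hball : ball (f z) (δ / 4) ∈ 𝓝 (f z) := ball_mem_nhds _ (by positivity)
  have hdet := det_fderiv_ne_zero_of_isBigO (f := f) (g := Function.invFunOn f K) (w := f z)
    (by rw [hleft]; exact hf.differentiableAt (hΩ.mem_nhds hz))
    (mem_of_superset (ball_mem_nhds _ hδ) fun w hw => Function.invFunOn_eq (hsub hw))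
    (.of_bound C (mem_of_superset hball fun w hw => by
      simpa only [mem_ofPred_eq, dist_eq_norm] using
        hC.dist_le_mul w hw _ (mem_of_mem_nhds hball)))
  rwa [hleft] at hdet

end Osgood

section Montel

theorem tendsto_prod_nhds_of_tendstoLocallyUniformlyOn {ι X Y : Type*} [TopologicalSpace X]
    [UniformSpace Y] {l : Filter ι} {u : ι → X → Y} {U : X → Y} {D : Set X} {z : X}
    (hu : TendstoLocallyUniformlyOn u U l D) (hD : D ∈ 𝓝 z) (hU : ContinuousAt U z) :
    Tendsto (fun q : ι × X => u q.1 q.2) (l ×ˢ 𝓝 z) (𝓝 (U z)) := by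
  refine tendsto_comp_of_locally_uniform_limit (F := fun q : ι × X => u q.1) hU tendsto_snd
    fun S hS => ?_
  obtain ⟨V, hV, hSV⟩ := hu S hS z (mem_of_mem_nhds hD)
  rw [nhdsWithin_eq_nhds.2 hD] at hV
  exact ⟨V, hV, hSV.prod_inl _⟩

theorem tendstoLocallyUniformlyOn_continuous_comp {ι X Y Z : Type*} [TopologicalSpace X]
    [UniformSpace Y] [UniformSpace Z] {l : Filter ι} {u : ι → X → Y} {U : X → Y} {D : Set X}
    {φ : Y → Z} (hφ : Continuous φ) (hu : TendstoLocallyUniformlyOn u U l D) (hD : IsOpen D)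
    (hU : ContinuousOn U D) :
    TendstoLocallyUniformlyOn (fun j y => φ (u j y)) (fun y => φ (U y)) l D := by
  rw [hD.tendstoLocallyUniformlyOn_iff_forall_tendsto]
  intro y hy
  have hUy : ContinuousAt U y := hU.continuousAt (hD.mem_nhds hy)
  have hleft : Tendsto (fun q : ι × X => φ (U q.2)) (l ×ˢ 𝓝 y) (𝓝 (φ (U y))) :=
    (hφ.continuousAt.comp hUy).tendsto.comp tendsto_snd
  have hright : Tendsto (fun q : ι × X => φ (u q.1 q.2)) (l ×ˢ 𝓝 y) (𝓝 (φ (U y))) :=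
    (hφ.tendsto _).comp (tendsto_prod_nhds_of_tendstoLocallyUniformlyOn hu (hD.mem_nhds hy) hUy)
  exact (hleft.prodMk_nhds hright).mono_right (nhds_le_uniformity _)

theorem eq_of_tendstoLocallyUniformlyOn {ι X Y : Type*} [TopologicalSpace X] [UniformSpace Y]
    [T2Space Y] {l : Filter ι} [l.NeBot] {u : ι → X → Y} {U : X → Y} {D : Set X} {x : ι → X}
    {z : X} {w : Y} (hu : TendstoLocallyUniformlyOn u U l D) (hD : D ∈ 𝓝 z) (hU : ContinuousAt U z)
    (hx : Tendsto x l (𝓝 z)) (hux : ∀ᶠ j in l, u j (x j) = w) : U z = w :=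
  tendsto_nhds_unique_of_eventuallyEq
    ((tendsto_prod_nhds_of_tendstoLocallyUniformlyOn hu hD hU).comp (tendsto_id.prodMk hx))
    tendsto_const_nhds hux

variable {ι E F : Type*} [NormedAddCommGroup E] [NormedSpace ℂ E] [NormedAddCommGroup F]
  [NormedSpace ℂ F] {u : ι → E → F}

theorem exists_eventually_dist_le_mul_dist {l : Filter ι} {z : E} {C : ℝ}
    (hd : ∀ᶠ q in l ×ˢ 𝓝 z, DifferentiableAt ℂ (u q.1) q.2)
    (hb : ∀ᶠ q in l ×ˢ 𝓝 z, ‖u q.1 q.2‖ ≤ C) :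
    ∃ L, ∀ᶠ q in l ×ˢ 𝓝 z, dist (u q.1 q.2) (u q.1 z) ≤ L * dist q.2 z := by
  obtain ⟨P, hP, r, hr, hPr⟩ := eventually_prod_nhds_iff.1 (hd.and hb)
  refine ⟨2 * C / r, eventually_prod_nhds_iff.2 ⟨P, hP, r, hr, fun j hj y hy => ?_⟩⟩
  refine Complex.dist_le_div_mul_dist_of_mapsTo_ball
    (fun v hv => (hPr hj hv).1.differentiableWithinAt) (fun v hv => ?_) hy
  rw [mem_closedBall, two_mul]
  exact (dist_le_norm_add_norm _ _).trans
    (add_le_add (hPr hj hv).2 (hPr hj (by rwa [dist_self])).2)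

/-- In this form of Montel's theorem an ultrafilter replaces the extraction of a subsequence. -/
theorem exists_tendstoLocallyUniformlyOn_of_bounded [ProperSpace F] (l : Ultrafilter ι) {D : Set E}
    (hD : IsOpen D)
    (hd : ∀ z ∈ D, ∀ᶠ q in (l : Filter ι) ×ˢ 𝓝 z, DifferentiableAt ℂ (u q.1) q.2)
    (hb : ∀ z ∈ D, ∃ C, ∀ᶠ q in (l : Filter ι) ×ˢ 𝓝 z, ‖u q.1 q.2‖ ≤ C) :
    ∃ U, TendstoLocallyUniformlyOn u U l D := by
  have hlim (z : E) (hz : z ∈ D) : ∃ w, Tendsto (fun j => u j z) l (𝓝 w) := by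
    obtain ⟨C, hC⟩ := hb z hz
    have hmem : ∀ᶠ j in (l : Filter ι), u j z ∈ closedBall 0 C :=
      hC.curry.mono fun j hj => mem_closedBall_zero_iff.2 hj.self_of_nhds
    obtain ⟨w, -, hw⟩ := (isCompact_closedBall (0 : F) C).ultrafilter_le_nhds
      (l.map fun j => u j z) (le_principal_iff.2 hmem)
    exact ⟨w, hw⟩
  choose! U hU using hlim
  refine ⟨U, hD.tendstoLocallyUniformlyOn_iff_forall_tendsto.2 fun z hz => ?_⟩
  obtain ⟨C, hC⟩ := hb z hz
  obtain ⟨L, hL⟩ := exists_eventually_dist_le_mul_dist (hd z hz) hC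
  have hLU : ∀ᶠ y in 𝓝 z, dist (U y) (U z) ≤ L * dist y z := by
    obtain ⟨P, hP, Q, hQ, hPQ⟩ := eventually_prod_iff.1 hL
    filter_upwards [hQ, hD.mem_nhds hz] with y hy hyD
    exact le_of_tendsto ((hU y hyD).dist (hU z hz)) (hP.mono fun j hj => hPQ hj hy)
  have hzero : Tendsto (fun q : ι × E => L * dist q.2 z + dist (u q.1 z) (U z) + L * dist q.2 z)
      ((l : Filter ι) ×ˢ 𝓝 z) (𝓝 0) := by
    have hy : Tendsto (fun q : ι × E => L * dist q.2 z) ((l : Filter ι) ×ˢ 𝓝 z) (𝓝 0) := by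
      have hdist : Tendsto (fun y => L * dist y z) (𝓝 z) (𝓝 0) :=
        Continuous.tendsto' (by fun_prop) z 0 (by simp)
      exact hdist.comp tendsto_snd
    have hj : Tendsto (fun q : ι × E => dist (u q.1 z) (U z)) ((l : Filter ι) ×ˢ 𝓝 z) (𝓝 0) :=
      (tendsto_iff_dist_tendsto_zero.1 (hU z hz)).comp tendsto_fst
    simpa using (hy.add hj).add hy
  rw [tendsto_uniformity_iff_dist_tendsto_zero]
  refine squeeze_zero' (Eventually.of_forall fun q => dist_nonneg) ?_ hzero
  filter_upwards [hL, hLU.prod_inr _] with q hq hqU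
  calc dist (U q.2) (u q.1 q.2)
      ≤ dist (U q.2) (U z) + dist (U z) (u q.1 z) + dist (u q.1 z) (u q.1 q.2) :=
        dist_triangle4 _ _ _ _
    _ ≤ L * dist q.2 z + dist (u q.1 z) (U z) + L * dist q.2 z := by
        rw [dist_comm (U z), dist_comm (u q.1 z) (u q.1 q.2)]
        gcongr

end Montel

section Hurwitz

variable {ι E : Type*} [NormedAddCommGroup E] [NormedSpace ℂ E] {l : Filter ι}

theorem le_norm_of_forall_mem_sphere_of_ne_zero {h : ℂ → ℂ} {c : ℂ} {s δ : ℝ} (hs : 0 < s)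
    (hδ : 0 < δ) (hd : DifferentiableOn ℂ h (closedBall c s)) (h0 : ∀ z ∈ closedBall c s, h z ≠ 0)
    (hsph : ∀ z ∈ sphere c s, δ ≤ ‖h z‖) : δ ≤ ‖h c‖ := by
  have hinv : ‖(h c)⁻¹‖ ≤ δ⁻¹ := by
    refine Complex.norm_le_of_forall_mem_frontier_norm_le (f := fun z => (h z)⁻¹) isBounded_ball
      ((hd.inv h0).diffContOnCl_ball subset_rfl) (fun z hz => ?_)
      (subset_closure (mem_ball_self hs))
    rw [norm_inv]
    exact inv_anti₀ hδ (hsph z (frontier_ball c hs.ne' ▸ hz))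
  rwa [norm_inv, inv_le_inv₀ (norm_pos_iff.2 (h0 c (mem_closedBall_self hs.le))) hδ] at hinv

theorem eventually_forall_mem_of_isCompact {X : Type*} [TopologicalSpace X] {K : Set X}
    (hK : IsCompact K) {P : ι → X → Prop} (h : ∀ z ∈ K, ∀ᶠ q in l ×ˢ 𝓝 z, P q.1 q.2) :
    ∀ᶠ j in l, ∀ z ∈ K, P j z := by
  have hprod : ∀ᶠ q in l ×ˢ 𝓝ˢ K, P q.1 q.2 := hK.mem_prod_nhdsSet_of_forall h
  exact hprod.curry.mono fun j hj => hj.self_of_nhdsSet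

variable [l.NeBot]

theorem eventually_eq_zero_of_tendstoLocallyUniformlyOn {h : ι → ℂ → ℂ} {H : ℂ → ℂ} {D : Set ℂ}
    {c : ℂ} (hD : IsOpen D) (hd : ∀ z ∈ D, ∀ᶠ q in l ×ˢ 𝓝 z, DifferentiableAt ℂ (h q.1) q.2)
    (h0 : ∀ z ∈ D, ∀ᶠ q in l ×ˢ 𝓝 z, h q.1 q.2 ≠ 0) (hu : TendstoLocallyUniformlyOn h H l D)
    (hc : c ∈ D) (hHc : H c = 0) : ∀ᶠ z in 𝓝 c, H z = 0 := by
  have hHd := differentiableOn_of_tendstoLocallyUniformlyOn hD hd hu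
  refine (hHd.analyticAt (hD.mem_nhds hc)).eventually_eq_zero_or_eventually_ne_zero.resolve_right
    fun hne => ?_
  obtain ⟨s, hs, hsub⟩ := nhds_basis_closedBall.mem_iff.1
    (inter_mem (hD.mem_nhds hc) (eventually_nhdsWithin_iff.1 hne))
  have hsD : closedBall c s ⊆ D := fun z hz => (hsub hz).1
  obtain ⟨z₀, hz₀, hmin⟩ := (isCompact_sphere c s).exists_isMinOn
    (NormedSpace.sphere_nonempty.2 hs.le)
    (hHd.continuousOn.mono (sphere_subset_closedBall.trans hsD)).norm
  set δ := ‖H z₀‖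
  have hδ : 0 < δ := norm_pos_iff.2
    ((hsub (sphere_subset_closedBall hz₀)).2 (ne_of_mem_sphere hz₀ hs.ne'))
  have hunif := tendstoUniformlyOn_iff.1
    ((tendstoLocallyUniformlyOn_iff_forall_isCompact hD).1 hu _ hsD (isCompact_closedBall c s))
    (δ / 2) (half_pos hδ)
  have hdiff : ∀ᶠ j in l, ∀ z ∈ closedBall c s, DifferentiableAt ℂ (h j) z ∧ h j z ≠ 0 :=
    eventually_forall_mem_of_isCompact (isCompact_closedBall c s)
      fun z hz => (hd z (hsD hz)).and (h0 z (hsD hz))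
  obtain ⟨j, hj, hdj⟩ := (hunif.and hdiff).exists
  have hlow : δ / 2 ≤ ‖h j c‖ := by
    refine le_norm_of_forall_mem_sphere_of_ne_zero hs (half_pos hδ)
      (fun z hz => (hdj z hz).1.differentiableWithinAt) (fun z hz => (hdj z hz).2) fun z hz => ?_
    have hHz : δ ≤ ‖H z‖ := hmin hz
    have hjz := hj z (sphere_subset_closedBall hz)
    rw [dist_eq_norm] at hjz
    linarith [norm_sub_norm_le (H z) (h j z)]
  have hup := hj c (mem_closedBall_self hs.le)
  rw [hHc, dist_zero_left] at hup
  exact hlow.not_gt hup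

theorem eqOn_zero_of_tendstoLocallyUniformlyOn [LocallyCompactSpace E] {h : ι → E → ℂ} {H : E → ℂ}
    {D : Set E} {z : E} (hD : IsOpen D) (hDc : IsPreconnected D)
    (hd : ∀ z ∈ D, ∀ᶠ q in l ×ˢ 𝓝 z, DifferentiableAt ℂ (h q.1) q.2)
    (h0 : ∀ z ∈ D, ∀ᶠ q in l ×ˢ 𝓝 z, h q.1 q.2 ≠ 0) (hu : TendstoLocallyUniformlyOn h H l D)
    (hz : z ∈ D) (hHz : H z = 0) : EqOn H 0 D := by
  have hHd := differentiableOn_of_tendstoLocallyUniformlyOn hD hd hu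
  have hH : IsRadoOn H D :=
    ⟨hHd.continuousOn, fun y hy _ => hHd.differentiableAt (hD.mem_nhds hy)⟩
  refine hH.eqOn_zero_of_isPreconnected hD hDc hz ?_
  obtain ⟨r, hr, hball⟩ := Metric.isOpen_iff.1 hD z hz
  filter_upwards [ball_mem_nhds z (half_pos hr)] with y hy
  set L : ℂ → E := fun t => z + t • (y - z)
  have hL : Differentiable ℂ L := by fun_prop
  have hline : MapsTo L (closedBall 0 2) D := by
    refine (mapsTo_add_smul_closedBall ?_).mono_right hball
    rw [dist_self]
    linarith [mem_ball_iff_norm.1 hy]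
  have hlift (t : ℂ) : Tendsto (fun q : ι × ℂ => (q.1, L q.2)) (l ×ˢ 𝓝 t) (l ×ˢ 𝓝 (L t)) :=
    tendsto_id.prodMap (hL.continuous.tendsto t)
  have hev : ∀ᶠ t in 𝓝 0, H (L t) = 0 := by
    refine eventually_eq_zero_of_tendstoLocallyUniformlyOn (hD.preimage hL.continuous)
      (fun t ht => ?_) (fun t ht => (hlift t).eventually (h0 _ ht))
      (hu.comp L (mapsTo_preimage L D) hL.continuous.continuousOn) ?_ ?_
    · exact ((hlift t).eventually (hd _ ht)).mono fun q hq => hq.comp q.2 (hL q.2)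
    · simpa [L] using hz
    · simpa [L] using hHz
  simpa [L] using (hH.comp hL hline).eq_zero_of_eventually_center hev (t := 1) (by simp)

end Hurwitz

section InverseFunction

theorem eventually_mem_image_of_tendsto_fderiv {ι 𝕜 E F : Type*} [RCLike 𝕜] [NormedAddCommGroup E]
    [NormedSpace 𝕜 E] [CompleteSpace E] [NormedAddCommGroup F] [NormedSpace 𝕜 F] {l : Filter ι}
    {u : ι → E → F} {e : E ≃L[𝕜] F} {z : E} {b : F} {V : Set E} (hV : V ∈ 𝓝 z)
    (hd : ∀ᶠ q in l ×ˢ 𝓝 z, DifferentiableAt 𝕜 (u q.1) q.2)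
    (hz : Tendsto (fun j => u j z) l (𝓝 b))
    (hz' : Tendsto (fun q : ι × E => fderiv 𝕜 (u q.1) q.2) (l ×ˢ 𝓝 z) (𝓝 (e : E →L[𝕜] F))) :
    ∀ᶠ j in l, b ∈ u j '' V := by
  rcases subsingleton_or_nontrivial E with hE | hE
  · have hF : Subsingleton F := e.symm.injective.subsingleton
    exact Eventually.of_forall fun j => ⟨z, mem_of_mem_nhds hV, Subsingleton.elim _ _⟩
  let _ : NormedSpace ℝ E := NormedSpace.restrictScalars ℝ 𝕜 E
  let R := e.toNonlinearRightInverse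
  have hR : 0 < R.nnnorm := e.nnnorm_symm_pos
  set c : NNReal := R.nnnorm⁻¹ / 2
  have hc : 0 < c := by positivity
  have hcR : (R.nnnorm : ℝ)⁻¹ - c = c := by simp only [c]; push_cast; ring
  obtain ⟨P, hP, r, hr, hPr⟩ := eventually_prod_nhds_iff.1
    (hd.and (tendsto_nhds.1 hz' c hc))
  obtain ⟨s, hs, hsV⟩ := nhds_basis_closedBall.mem_iff.1 (inter_mem hV (ball_mem_nhds z hr))
  filter_upwards [hP, tendsto_nhds.1 hz (c * s) (by positivity)] with j hj hzj
  have happrox : ApproximatesLinearOn (u j) (e : E →L[𝕜] F) (closedBall z s) c := by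
    rw [ApproximatesLinearOn.approximatesLinearOn_iff_lipschitzOnWith]
    refine (convex_closedBall z s).lipschitzOnWith_of_nnnorm_hasFDerivWithin_le (𝕜 := 𝕜)
      (f' := fun y => fderiv 𝕜 (u j) y - (e : E →L[𝕜] F)) (fun y hy => ?_) fun y hy => ?_
    · exact ((hPr hj (hsV hy).2).1.hasFDerivAt.sub
        (e : E →L[𝕜] F).hasFDerivAt).hasFDerivWithinAt
    · have hdist := (hPr hj (hsV hy).2).2.le
      rwa [dist_eq_norm] at hdist
  have hsurj := happrox.surjOn_closedBall_of_nonlinearRightInverse R hs.le subset_rfl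
  rw [hcR] at hsurj
  obtain ⟨y, hy, hyb⟩ := hsurj (mem_closedBall'.2 hzj.le)
  exact ⟨y, (hsV hy).1, hyb⟩

theorem det_fderiv_ne_zero_of_eventually_comp_eq {𝕜 E : Type*} [NontriviallyNormedField 𝕜]
    [NormedAddCommGroup E] [NormedSpace 𝕜 E] {f g : E → E} {w : E}
    (hf : DifferentiableAt 𝕜 f (g w)) (hg : DifferentiableAt 𝕜 g w)
    (hfg : ∀ᶠ y in 𝓝 w, f (g y) = y) :
    (fderiv 𝕜 f (g w)).det ≠ 0 ∧ (fderiv 𝕜 g w).det ≠ 0 := by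
  have hcomp : (fderiv 𝕜 f (g w)).comp (fderiv 𝕜 g w) = ContinuousLinearMap.id 𝕜 E :=
    ((hf.hasFDerivAt.comp w hg.hasFDerivAt).congr_of_eventuallyEq
      (hfg.mono fun y hy => hy.symm)).unique (hasFDerivAt_id w)
  have hmul : (fderiv 𝕜 f (g w)).det * (fderiv 𝕜 g w).det = 1 := by
    have hdet := congrArg ContinuousLinearMap.det hcomp
    rw [ContinuousLinearMap.det, ContinuousLinearMap.toLinearMap_comp, LinearMap.det_comp] at hdet
    simpa [ContinuousLinearMap.det] using hdet
  exact ⟨left_ne_zero_of_mul_eq_one hmul, right_ne_zero_of_mul_eq_one hmul⟩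

end InverseFunction

section Limits

variable {ι E : Type*} [NormedAddCommGroup E] [NormedSpace ℂ E] {D T : Set E} {z : E}

/-- The family `u` is eventually étale on `D`, with values in `T`: near every point of `D` and for
`l`-almost all `j`, uniformly, `u j` is holomorphic with nonzero Jacobian and takes values in `T`.
No single `u j` has to be defined on all of `D`, which is needed for inverses of maps whose images
exhaust `D`. -/
def EventuallyEtaleOn (l : Filter ι) (u : ι → E → E) (D T : Set E) : Prop :=
  ∀ z ∈ D, ∀ᶠ q in l ×ˢ 𝓝 z,
    DifferentiableAt ℂ (u q.1) q.2 ∧ (fderiv ℂ (u q.1) q.2).det ≠ 0 ∧ u q.1 q.2 ∈ T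

namespace EventuallyEtaleOn

variable {l : Filter ι} {u : ι → E → E} {U : E → E}

theorem eventually_differentiableAt (hu : EventuallyEtaleOn l u D T) :
    ∀ z ∈ D, ∀ᶠ q in l ×ˢ 𝓝 z, DifferentiableAt ℂ (u q.1) q.2 :=
  fun z hz => (hu z hz).mono fun _ hq => hq.1

variable [FiniteDimensional ℂ E]

theorem eventually_differentiableAt_det_fderiv (hu : EventuallyEtaleOn l u D T) (hz : z ∈ D) :
    ∀ᶠ q in l ×ˢ 𝓝 z, DifferentiableAt ℂ (fun y => (fderiv ℂ (u q.1) y).det) q.2 := by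
  obtain ⟨P, hP, r, hr, hPr⟩ := eventually_prod_nhds_iff.1 (hu z hz)
  refine eventually_prod_nhds_iff.2 ⟨P, hP, r, hr, fun j hj y hy => ?_⟩
  exact (differentiableOn_det_fderiv isOpen_ball fun v hv =>
    (hPr hj hv).1.differentiableWithinAt).differentiableAt (isOpen_ball.mem_nhds hy)

variable [l.NeBot]

theorem differentiableOn (hu : EventuallyEtaleOn l u D T) (hD : IsOpen D)
    (hU : TendstoLocallyUniformlyOn u U l D) : DifferentiableOn ℂ U D :=
  differentiableOn_of_tendstoLocallyUniformlyOn hD hu.eventually_differentiableAt hU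

theorem det_fderiv_ne_zero (hu : EventuallyEtaleOn l u D T) (hD : IsOpen D) (hDc : IsPreconnected D)
    (hU : TendstoLocallyUniformlyOn u U l D) {p : E} (hp : p ∈ D) (hdet : (fderiv ℂ U p).det ≠ 0)
    (hz : z ∈ D) : (fderiv ℂ U z).det ≠ 0 := fun h0 => by
  have hdetlim : TendstoLocallyUniformlyOn (fun j y => (fderiv ℂ (u j) y).det)
      (fun y => (fderiv ℂ U y).det) l D :=
    tendstoLocallyUniformlyOn_continuous_comp differentiable_det.continuous
      (tendstoLocallyUniformlyOn_fderiv hD hu.eventually_differentiableAt hU) hD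
      (differentiableOn_fderiv hD (hu.differentiableOn hD hU)).continuousOn
  exact hdet (eqOn_zero_of_tendstoLocallyUniformlyOn hD hDc
    (fun y hy => hu.eventually_differentiableAt_det_fderiv hy)
    (fun y hy => (hu y hy).mono fun q hq => hq.2.1) hdetlim hz h0 hp)

theorem mapsTo (hu : EventuallyEtaleOn l u D T) (hD : IsOpen D) (hDc : IsPreconnected D)
    (hU : TendstoLocallyUniformlyOn u U l D) {p : E} (hp : p ∈ D)
    (hdet : (fderiv ℂ U p).det ≠ 0) : MapsTo U D T := fun z hz => by
  let e := (fderiv ℂ U z).toContinuousLinearEquivOfDetNeZero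
    (hu.det_fderiv_ne_zero hD hDc hU hp hdet hz)
  have he : Tendsto (fun q : ι × E => fderiv ℂ (u q.1) q.2) (l ×ˢ 𝓝 z) (𝓝 (e : E →L[ℂ] E)) := by
    rw [ContinuousLinearMap.coe_toContinuousLinearEquivOfDetNeZero]
    exact tendsto_prod_nhds_of_tendstoLocallyUniformlyOn
      (tendstoLocallyUniformlyOn_fderiv hD hu.eventually_differentiableAt hU) (hD.mem_nhds hz)
      ((differentiableOn_fderiv hD (hu.differentiableOn hD hU)).continuousOn.continuousAt
        (hD.mem_nhds hz))
  obtain ⟨P, hP, r, hr, hPr⟩ := eventually_prod_nhds_iff.1 (hu z hz)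
  obtain ⟨j, hj, y, hy, hyz⟩ := (hP.and (eventually_mem_image_of_tendsto_fderiv
    (ball_mem_nhds z hr) (hu.eventually_differentiableAt z hz) (hU.tendsto_at hz) he)).exists
  exact hyz ▸ (hPr hj hy).2.2

theorem invOn_of_apply_mem {Ω M : Set E} {f g : ι → E → E} {F G : E → E} {p : E}
    (hf : EventuallyEtaleOn l f Ω M) (hg : EventuallyEtaleOn l g M Ω) (hΩ : IsOpen Ω)
    (hΩc : IsPreconnected Ω) (hM : IsOpen M) (hMc : IsPreconnected M)
    (hF : TendstoLocallyUniformlyOn f F l Ω) (hG : TendstoLocallyUniformlyOn g G l M)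
    (hgf : ∀ z ∈ Ω, ∀ᶠ j in l, g j (f j z) = z) (hfg : ∀ w ∈ M, ∀ᶠ j in l, f j (g j w) = w)
    (hp : p ∈ Ω) (hFp : F p ∈ M) : MapsTo F Ω M ∧ MapsTo G M Ω ∧ InvOn G F Ω M := by
  have hFd (z : E) (hz : z ∈ Ω) : DifferentiableAt ℂ F z :=
    (hf.differentiableOn hΩ hF).differentiableAt (hΩ.mem_nhds hz)
  have hGd (w : E) (hw : w ∈ M) : DifferentiableAt ℂ G w :=
    (hg.differentiableOn hM hG).differentiableAt (hM.mem_nhds hw)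
  have hGF (z : E) (hz : z ∈ Ω) (hFz : F z ∈ M) : G (F z) = z :=
    eq_of_tendstoLocallyUniformlyOn hG (hM.mem_nhds hFz) (hGd _ hFz).continuousAt
      (hF.tendsto_at hz) (hgf z hz)
  have hFG (w : E) (hw : w ∈ M) (hGw : G w ∈ Ω) : F (G w) = w :=
    eq_of_tendstoLocallyUniformlyOn hF (hΩ.mem_nhds hGw) (hFd _ hGw).continuousAt
      (hG.tendsto_at hw) (hfg w hw)
  have hlocal : ∀ᶠ z in 𝓝 p, G (F z) = z := by
    filter_upwards [hΩ.mem_nhds hp, (hFd p hp).continuousAt.preimage_mem_nhds (hM.mem_nhds hFp)]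
      with z hz hFz using hGF z hz hFz
  obtain ⟨hdetG, hdetF⟩ :=
    det_fderiv_ne_zero_of_eventually_comp_eq (hGd _ hFp) (hFd p hp) hlocal
  have hFM : MapsTo F Ω M := hf.mapsTo hΩ hΩc hF hp hdetF
  have hGΩ : MapsTo G M Ω := hg.mapsTo hM hMc hG hFp hdetG
  exact ⟨hFM, hGΩ, fun z hz => hGF z hz (hFM hz), fun w hw => hFG w hw (hGΩ hw)⟩

end EventuallyEtaleOn

theorem EventuallyEtaleOn.exists_tendstoLocallyUniformlyOn [FiniteDimensional ℂ E]
    {l : Ultrafilter ι} {u : ι → E → E} (hu : EventuallyEtaleOn l u D T) (hD : IsOpen D)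
    (hT : Bornology.IsBounded T) : ∃ U, TendstoLocallyUniformlyOn u U l D := by
  obtain ⟨C, hC⟩ := hT.exists_norm_le
  exact exists_tendstoLocallyUniformlyOn_of_bounded l hD hu.eventually_differentiableAt
    fun z hz => ⟨C, (hu z hz).mono fun q hq => hC _ hq.2.2⟩

end Limits

section Exhaustion

theorem eventually_mem_of_forall_isCompact {ι X : Type*} [TopologicalSpace X]
    [LocallyCompactSpace X] {l : Filter ι} {M : Set X} {S : ι → Set X} (hM : IsOpen M)
    (hS : ∀ K ⊆ M, IsCompact K → ∀ᶠ j in l, K ⊆ S j) {w : X} (hw : w ∈ M) :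
    ∀ᶠ q in l ×ˢ 𝓝 w, q.2 ∈ S q.1 := by
  obtain ⟨K, hK, hKM, hKc⟩ := local_compact_nhds (hM.mem_nhds hw)
  filter_upwards [(hS K hKM hKc).prod_mk (eventually_mem_set.2 hK)] with q hq using hq.1 hq.2

theorem isPreconnected_of_forall_isCompact {ι X : Type*} [TopologicalSpace X] {l : Filter ι}
    [l.NeBot] {M : Set X} {S : ι → Set X} (hSM : ∀ j, S j ⊆ M) (hSc : ∀ j, IsPreconnected (S j))
    (hS : ∀ K ⊆ M, IsCompact K → ∀ᶠ j in l, K ⊆ S j) : IsPreconnected M := by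
  refine isPreconnected_of_forall_pair fun v hv w hw => ?_
  obtain ⟨j, hj⟩ := (hS {v, w} (pair_subset hv hw) (toFinite _).isCompact).exists
  exact ⟨S j, hSM j, hj (mem_insert v _), hj (mem_insert_of_mem v rfl), hSc j⟩

variable {E : Type*} [NormedAddCommGroup E] [NormedSpace ℂ E] [FiniteDimensional ℂ E] {Ω : Set E}

theorem differentiableAt_and_det_fderiv_ne_zero_invFunOn {f : E → E} (hΩ : IsOpen Ω)
    (hf : DifferentiableOn ℂ f Ω) (hinj : InjOn f Ω) {w : E} (hw : w ∈ f '' Ω) :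
    DifferentiableAt ℂ (Function.invFunOn f Ω) w ∧
      (fderiv ℂ (Function.invFunOn f Ω) w).det ≠ 0 := by
  obtain ⟨z, hz, rfl⟩ := hw
  have hgf : Function.invFunOn f Ω (f z) = z := hinj.leftInvOn_invFunOn hz
  obtain ⟨hnhds, hg⟩ := image_mem_nhds_and_differentiableAt_invFunOn
    (contDiffAt_one_of_differentiableOn hΩ hf hz) (det_fderiv_ne_zero_of_injOn hΩ hf hinj hz)
    (hΩ.mem_nhds hz) hinj
  refine ⟨hg, (det_fderiv_ne_zero_of_eventually_comp_eq (f := f) ?_ hg ?_).2⟩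
  · exact hgf.symm ▸ hf.differentiableAt (hΩ.mem_nhds hz)
  · exact eventually_of_mem hnhds fun y hy => Function.invFunOn_eq hy

variable {ι : Type*} {l : Filter ι} {M : Set E} {f : ι → E → E} (hΩ : IsOpen Ω)
  (hf : ∀ j, DifferentiableOn ℂ (f j) Ω) (hinj : ∀ j, InjOn (f j) Ω)
include hΩ hf hinj

theorem eventuallyEtaleOn_of_injOn (hmaps : ∀ j, MapsTo (f j) Ω M) : EventuallyEtaleOn l f Ω M :=
  fun _ hz => ((hΩ.eventually_mem hz).prod_inr l).mono fun q hq =>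
    ⟨(hf q.1).differentiableAt (hΩ.mem_nhds hq),
      det_fderiv_ne_zero_of_injOn hΩ (hf q.1) (hinj q.1) hq, hmaps q.1 hq⟩

theorem eventuallyEtaleOn_invFunOn (hM : IsOpen M)
    (hexh : ∀ K ⊆ M, IsCompact K → ∀ᶠ j in l, K ⊆ f j '' Ω) :
    EventuallyEtaleOn l (fun j => Function.invFunOn (f j) Ω) M Ω := fun w hw => by
  filter_upwards [eventually_mem_of_forall_isCompact hM hexh hw] with q hq
  obtain ⟨hd, hdet⟩ := differentiableAt_and_det_fderiv_ne_zero_invFunOn hΩ (hf q.1) (hinj q.1) hq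
  exact ⟨hd, hdet, Function.invFunOn_mem hq⟩

end Exhaustion

theorem stmt10_general {ι E : Type*} [NormedAddCommGroup E] [NormedSpace ℂ E]
    [FiniteDimensional ℂ E] {l : Filter ι} [l.NeBot] {Ω M : Set E} (hΩ : IsOpen Ω)
    (hΩc : IsPreconnected Ω) (hΩb : Bornology.IsBounded Ω) (hM : IsOpen M)
    (hMb : Bornology.IsBounded M) {f : ι → E → E} (hf : ∀ j, DifferentiableOn ℂ (f j) Ω)
    (hinj : ∀ j, InjOn (f j) Ω) (hmaps : ∀ j, MapsTo (f j) Ω M)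
    (hexh : ∀ K ⊆ M, IsCompact K → ∀ᶠ j in l, K ⊆ f j '' Ω) {a : E} (ha : a ∈ M) {x : ι → E}
    (hfx : ∀ j, f j (x j) = a) {p : E} (hp : p ∈ Ω) (hxp : Tendsto x l (𝓝 p)) :
    ∃ F G : E → E, DifferentiableOn ℂ F Ω ∧ BijOn F Ω M ∧ DifferentiableOn ℂ G M ∧
      (∀ z ∈ Ω, G (F z) = z) ∧ ∀ w ∈ M, F (G w) = w := by
  let μ := Ultrafilter.of l
  have hμ : (μ : Filter ι) ≤ l := Ultrafilter.of_le l
  have hMc : IsPreconnected M := isPreconnected_of_forall_isCompact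
    (fun j => (hmaps j).image_subset) (fun j => hΩc.image _ (hf j).continuousOn) hexh
  replace hexh (K : Set E) (hK : K ⊆ M) (hKc : IsCompact K) :
      ∀ᶠ j in (μ : Filter ι), K ⊆ f j '' Ω :=
    (hexh K hK hKc).filter_mono hμ
  have hfe := eventuallyEtaleOn_of_injOn (l := μ) hΩ hf hinj hmaps
  have hge := eventuallyEtaleOn_invFunOn hΩ hf hinj hM hexh
  obtain ⟨F, hF⟩ := hfe.exists_tendstoLocallyUniformlyOn hΩ hMb
  obtain ⟨G, hG⟩ := hge.exists_tendstoLocallyUniformlyOn hM hΩb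
  have hFd := hfe.differentiableOn hΩ hF
  have hFp : F p = a := eq_of_tendstoLocallyUniformlyOn hF (hΩ.mem_nhds hp)
    (hFd.continuousOn.continuousAt (hΩ.mem_nhds hp)) (hxp.mono_left hμ) (.of_forall hfx)
  obtain ⟨hFM, hGΩ, hinv⟩ := hfe.invOn_of_apply_mem hge hΩ hΩc hM hMc hF hG
    (fun z hz => .of_forall fun j => (hinj j).leftInvOn_invFunOn hz)
    (fun w hw => (hexh {w} (singleton_subset_iff.2 hw) isCompact_singleton).mono
      fun j hj => Function.invFunOn_eq (hj rfl)) hp (hFp ▸ ha)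
  exact ⟨F, G, hFd, hinv.bijOn hFM hGΩ, hge.differentiableOn hM hG,
    fun z hz => hinv.1 hz, fun w hw => hinv.2 hw⟩

theorem stmt10 (N : ℕ) (hN : 1 ≤ N)
    (Ω M : Set (Fin N → ℂ))
    (hΩopen : IsOpen Ω) (hΩconn : IsConnected Ω) (hΩbdd : Bornology.IsBounded Ω)
    (hMopen : IsOpen M) (hMconn : IsConnected M) (hMbdd : Bornology.IsBounded M)
    (f : ℕ → (Fin N → ℂ) → (Fin N → ℂ))
    (hfhol : ∀ j, DifferentiableOn ℂ (f j) Ω)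
    (hfinj : ∀ j, Set.InjOn (f j) Ω)
    (hfmaps : ∀ j, Set.MapsTo (f j) Ω M)
    (hexh : ∀ K : Set (Fin N → ℂ), K ⊆ M → IsCompact K →
      ∃ j0 : ℕ, ∀ j ≥ j0, K ⊆ f j '' Ω)
    (a : Fin N → ℂ) (ha : a ∈ M)
    (x : ℕ → Fin N → ℂ) (hx : ∀ j, x j ∈ Ω) (hfx : ∀ j, f j (x j) = a)
    (p : Fin N → ℂ) (hp : p ∈ Ω) (hxp : Tendsto x atTop (nhds p)) :
    ∃ F G : (Fin N → ℂ) → (Fin N → ℂ),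
      DifferentiableOn ℂ F Ω ∧ Set.BijOn F Ω M ∧
      DifferentiableOn ℂ G M ∧
      (∀ z ∈ Ω, G (F z) = z) ∧ (∀ w ∈ M, F (G w) = w) := by
  exact stmt10_general hΩopen hΩconn.isPreconnected hΩbdd hMopen hMbdd hfhol hfinj hfmaps
    (fun K hK hKc => eventually_atTop.2 (hexh K hK hKc)) ha hfx hp hxp
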